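/- Let f : ℍⁿ_κ → ℝ be differentiable with gradient Lipschitz continuous on a closed κ-hyperbolically convex set C with constant L ≥ 0, let 0 < α < 1/L, and let (p_k) be generated by p_{k+1} = P_C(exp_{p_k}(−α grad f(p_k))) starting from p₀ ∈ C. Then p_k ∈ C for all k, and f(p_{k+1}) ≤ f(p_k) − ((1−αL)/(2α))·d(p_k, p_{k+1})² for all k; in particular, (f(p_k)) is non-increasing. -/

import Mathlib

/-!
Consider the geodesic triangle `p, q, w` with `p = p_k`, `q = p_{k+1}` and
`w = exp_p (-α grad f p)`, so that `log_p w = -α grad f p`. The variational inequality of the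
projection says that its angle at `q` is at least `π / 2`. By the hyperbolic law of cosines
`cosh d(q,w) cosh d(p,q) ≤ cosh d(p,w)`, and since `x / tanh x` is increasing on `(0, ∞)` this
yields `d(p,q)² ≤ ⟨log_p w, log_p q⟩ = -α ⟨grad f p, log_p q⟩`. Inserting this into the descent
inequality `f q ≤ f p + ⟨grad f p, log_p q⟩ + (L / 2) d(p,q)²` gives a decrease of
`(1 / α - L / 2) d(p,q)²`, which is `d(p,q)² / (2α)` more than is claimed.
-/

noncomputable section

/-- Lorentzian inner product on ℝ^{n+1}. -/
def lip {n : ℕ} (x y : Fin (n+1) → ℝ) : ℝ :=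
  (∑ i : Fin n, x i.castSucc * y i.castSucc) - x (Fin.last n) * y (Fin.last n)

/-- Lorentzian norm (of vectors with nonnegative self-product). -/
def lnorm {n : ℕ} (x : Fin (n+1) → ℝ) : ℝ := Real.sqrt (lip x x)

/-- Euclidean dot product. -/
def edot {n : ℕ} (x y : Fin (n+1) → ℝ) : ℝ := ∑ i, x i * y i

/-- The matrix J = diag(1,…,1,−1) as a map. -/
def Jm {n : ℕ} (x : Fin (n+1) → ℝ) : Fin (n+1) → ℝ :=
  fun i => if i = Fin.last n then -(x i) else x i

/-- The κ-hyperbolic space form (hyperboloid model). -/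
def Hyp {n : ℕ} (κ : ℝ) : Set (Fin (n+1) → ℝ) :=
  {p | lip p p = -1/κ ∧ 0 < p (Fin.last n)}

/-- Inverse hyperbolic cosine. -/
def arcosh (x : ℝ) : ℝ := Real.log (x + Real.sqrt (x^2 - 1))

/-- Intrinsic distance on the κ-hyperbolic space form. -/
def dH {n : ℕ} (κ : ℝ) (p q : Fin (n+1) → ℝ) : ℝ :=
  (1 / Real.sqrt κ) * arcosh (-(κ * lip p q))

/-- Lorentzian projection onto the tangent space at p. -/
def projT {n : ℕ} (κ : ℝ) (p x : Fin (n+1) → ℝ) : Fin (n+1) → ℝ :=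
  x + (κ * lip p x) • p

/-- Logarithm map of the κ-hyperbolic space form. -/
def logH {n : ℕ} (κ : ℝ) (p q : Fin (n+1) → ℝ) : Fin (n+1) → ℝ :=
  (dH κ p q / lnorm (projT κ p q)) • projT κ p q

/-- Exponential map of the κ-hyperbolic space form. -/
def expH {n : ℕ} (κ : ℝ) (p v : Fin (n+1) → ℝ) : Fin (n+1) → ℝ :=
  Real.cosh (Real.sqrt κ * lnorm v) • p +
    (Real.sinh (Real.sqrt κ * lnorm v) / (Real.sqrt κ * lnorm v)) • v

/-- The cone spanned by a set. -/
def coneOf {n : ℕ} (C : Set (Fin (n+1) → ℝ)) : Set (Fin (n+1) → ℝ) :=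
  {x | ∃ t : ℝ, 0 ≤ t ∧ ∃ p ∈ C, x = t • p}

/-- The Lorentz cone. -/
def LorentzCone {n : ℕ} : Set (Fin (n+1) → ℝ) :=
  {x | lip x x ≤ 0 ∧ 0 ≤ x (Fin.last n)}

/-- The interior of the Lorentz cone. -/
def LorentzConeInt {n : ℕ} : Set (Fin (n+1) → ℝ) :=
  {x | lip x x < 0 ∧ 0 < x (Fin.last n)}

/-- Euclidean gradient of f at p. -/
def euclGrad {n : ℕ} (f : (Fin (n+1) → ℝ) → ℝ) (p : Fin (n+1) → ℝ) : Fin (n+1) → ℝ :=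
  fun i => fderiv ℝ f p (Pi.single i 1)

/-- Riemannian gradient on the κ-hyperbolic space form. -/
def gradH {n : ℕ} (κ : ℝ) (f : (Fin (n+1) → ℝ) → ℝ) (p : Fin (n+1) → ℝ) : Fin (n+1) → ℝ :=
  projT κ p (Jm (euclGrad f p))

/-- Parallel transport from T_p to T_q along the geodesic. -/
def ptrans {n : ℕ} (κ : ℝ) (p q v : Fin (n+1) → ℝ) : Fin (n+1) → ℝ :=
  v - ((κ / (κ * lip p q - 1)) * lip q v) • (p + q)

section RealInequalities

theorem convexOn_sinh : ConvexOn ℝ (Set.Ici 0) Real.sinh :=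
  convexOn_of_deriv2_nonneg' (convex_Ici 0) Real.differentiable_sinh.differentiableOn
    (by simpa using Real.differentiable_cosh.differentiableOn)
    (fun x hx => by simpa using hx)

theorem mul_sinh_le_mul_sinh {x y : ℝ} (hx : 0 ≤ x) (hxy : x ≤ y) :
    y * Real.sinh x ≤ x * Real.sinh y := by
  rcases (hx.trans hxy).eq_or_lt with rfl | hy
  · simp [le_antisymm hxy hx]
  have hsecant := convexOn_sinh.2 Set.self_mem_Ici (Set.mem_Ici.2 hy.le)
    (sub_nonneg.2 ((div_le_one hy).2 hxy)) (div_nonneg hx hy.le) (sub_add_cancel 1 (x / y))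
  simp only [smul_eq_mul, mul_zero, zero_add, Real.sinh_zero, div_mul_cancel₀ x hy.ne'] at hsecant
  calc y * Real.sinh x ≤ y * (x / y * Real.sinh y) := by gcongr
    _ = x * Real.sinh y := by field_simp

-- The product formulas for `sinh` and `cosh` reduce this to `mul_sinh_le_mul_sinh` at `a ± b`.
theorem mul_sinh_mul_cosh_le {a b : ℝ} (hb : 0 ≤ b) (hab : b ≤ a) :
    b * (Real.sinh a * Real.cosh b) ≤ a * (Real.sinh b * Real.cosh a) := by
  have h := mul_sinh_le_mul_sinh (x := a - b) (y := a + b) (by linarith) (by linarith)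
  rw [Real.sinh_sub, Real.sinh_add] at h
  linarith

theorem sq_le_of_mul_cosh_le_cosh {a b D : ℝ} (ha : 0 ≤ a) (hb : 0 < b) (hD : 1 ≤ D)
    (h : D * Real.cosh b ≤ Real.cosh a) :
    b ^ 2 ≤ a / Real.sinh a * (b / Real.sinh b) * (Real.cosh a * Real.cosh b - D) := by
  have hcb := Real.cosh_pos b
  have hba : b ≤ a := by
    have : Real.cosh b ≤ Real.cosh a := (le_mul_of_one_le_left hcb.le hD).trans h
    rwa [Real.cosh_le_cosh, abs_of_pos hb, abs_of_nonneg ha] at this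
  have ha' : 0 < a := hb.trans_le hba
  have hsa : 0 < Real.sinh a := Real.sinh_pos_iff.2 ha'
  have hsb : 0 < Real.sinh b := Real.sinh_pos_iff.2 hb
  have hsq : Real.cosh a * Real.sinh b ^ 2 ≤
      Real.cosh b * (Real.cosh a * Real.cosh b - D) := by
    rw [Real.sinh_sq]; linarith
  rw [div_mul_div_comm, div_mul_eq_mul_div, le_div_iff₀ (mul_pos hsa hsb)]
  refine le_of_mul_le_mul_left ?_ hcb
  calc Real.cosh b * (b ^ 2 * (Real.sinh a * Real.sinh b))
      = b * (Real.sinh a * Real.cosh b) * (b * Real.sinh b) := by ring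
    _ ≤ a * (Real.sinh b * Real.cosh a) * (b * Real.sinh b) :=
        mul_le_mul_of_nonneg_right (mul_sinh_mul_cosh_le hb.le hba) (by positivity)
    _ = a * b * (Real.cosh a * Real.sinh b ^ 2) := by ring
    _ ≤ a * b * (Real.cosh b * (Real.cosh a * Real.cosh b - D)) := by gcongr
    _ = Real.cosh b * (a * b * (Real.cosh a * Real.cosh b - D)) := by ring

end RealInequalities

section LorentzForm

variable {n : ℕ} {x y z : Fin (n + 1) → ℝ}

/-- The Lorentzian inner product `lip` bundled as a bilinear form, which makes the library's
algebra of bilinear forms and its Cauchy–Schwarz inequality available for `lip`. -/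
def lorentzForm : LinearMap.BilinForm ℝ (Fin (n + 1) → ℝ) :=
  LinearMap.mk₂ ℝ lip
    (fun x y z => by simp only [lip, Pi.add_apply, add_mul, Finset.sum_add_distrib]; ring)
    (fun c x y => by
      simp only [lip, Pi.smul_apply, smul_eq_mul, mul_assoc, ← Finset.mul_sum, mul_sub])
    (fun x y z => by simp only [lip, Pi.add_apply, mul_add, Finset.sum_add_distrib]; ring)
    (fun c x y => by
      simp only [lip, Pi.smul_apply, smul_eq_mul, mul_left_comm _ c, ← Finset.mul_sum, mul_sub])

theorem lip_comm (x y : Fin (n + 1) → ℝ) : lip x y = lip y x := by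
  simp only [lip, mul_comm]

theorem lip_add_left (x y z : Fin (n + 1) → ℝ) : lip (x + y) z = lip x z + lip y z :=
  LinearMap.map_add₂ lorentzForm x y z

theorem lip_add_right (x y z : Fin (n + 1) → ℝ) : lip x (y + z) = lip x y + lip x z :=
  map_add (lorentzForm x) y z

theorem lip_smul_left (c : ℝ) (x y : Fin (n + 1) → ℝ) : lip (c • x) y = c * lip x y :=
  LinearMap.map_smul₂ lorentzForm c x y

theorem lip_smul_right (c : ℝ) (x y : Fin (n + 1) → ℝ) : lip x (c • y) = c * lip x y :=
  map_smul (lorentzForm x) c y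

theorem lip_neg_left (x y : Fin (n + 1) → ℝ) : lip (-x) y = -lip x y :=
  LinearMap.map_neg₂ lorentzForm x y

theorem lip_neg_right (x y : Fin (n + 1) → ℝ) : lip x (-y) = -lip x y :=
  map_neg (lorentzForm x) y

theorem lip_sub_left (x y z : Fin (n + 1) → ℝ) : lip (x - y) z = lip x z - lip y z :=
  LinearMap.map_sub₂ lorentzForm x y z

theorem lip_sub_right (x y z : Fin (n + 1) → ℝ) : lip x (y - z) = lip x y - lip x z :=
  map_sub (lorentzForm x) y z

theorem lip_zero_right (x : Fin (n + 1) → ℝ) : lip x 0 = 0 :=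
  map_zero (lorentzForm x)

theorem lip_self (x : Fin (n + 1) → ℝ) :
    lip x x = (∑ i : Fin n, x i.castSucc ^ 2) - x (Fin.last n) ^ 2 := by
  simp only [lip, sq]

theorem sq_mul_sq_le_of_lip_eq_zero (h : lip z x = 0) :
    z (Fin.last n) ^ 2 * x (Fin.last n) ^ 2 ≤
      (∑ i : Fin n, z i.castSucc ^ 2) * ∑ i : Fin n, x i.castSucc ^ 2 := by
  rw [← mul_pow, ← sub_eq_zero.1 h]
  exact Finset.sum_mul_sq_le_sq_mul_sq _ _ _

theorem lip_self_nonneg_of_timelike (hz : lip z z < 0) (h : lip z x = 0) : 0 ≤ lip x x := by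
  have hcs := sq_mul_sq_le_of_lip_eq_zero h
  rw [lip_self] at hz ⊢
  have hX : 0 ≤ ∑ i : Fin n, x i.castSucc ^ 2 := Finset.sum_nonneg fun i _ => sq_nonneg _
  have hZ : 0 ≤ ∑ i : Fin n, z i.castSucc ^ 2 := Finset.sum_nonneg fun i _ => sq_nonneg _
  refine sub_nonneg.2 (le_of_mul_le_mul_left (hcs.trans ?_) (hZ.trans_lt (sub_neg.1 hz)))
  exact mul_le_mul_of_nonneg_right (sub_neg.1 hz).le hX

theorem eq_zero_of_lip_self_eq_zero (hz : lip z z < 0) (h : lip z x = 0) (hx : lip x x = 0) :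
    x = 0 := by
  have hcs := sq_mul_sq_le_of_lip_eq_zero h
  rw [lip_self] at hz hx
  have hX : 0 ≤ ∑ i : Fin n, x i.castSucc ^ 2 := Finset.sum_nonneg fun i _ => sq_nonneg _
  have hsum : ∑ i : Fin n, x i.castSucc ^ 2 = 0 := by
    rw [← sub_eq_zero.1 hx] at hcs
    nlinarith
  have hlast : x (Fin.last n) = 0 := by simpa [hsum] using hx
  rw [Finset.sum_eq_zero_iff_of_nonneg fun i _ => sq_nonneg _] at hsum
  funext i
  refine Fin.lastCases hlast (fun j => ?_) i
  simpa using hsum j (Finset.mem_univ j)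

theorem lnorm_nonneg (x : Fin (n + 1) → ℝ) : 0 ≤ lnorm x :=
  Real.sqrt_nonneg _

theorem lnorm_sq (hz : lip z z < 0) (h : lip z x = 0) : lnorm x ^ 2 = lip x x :=
  Real.sq_sqrt (lip_self_nonneg_of_timelike hz h)

theorem abs_lip_le_lnorm_mul_lnorm (hz : lip z z < 0) (hx : lip z x = 0) (hy : lip z y = 0) :
    |lip x y| ≤ lnorm x * lnorm y := by
  let B := lorentzForm.restrict (LinearMap.ker (lorentzForm z))
  have hcs : lip x y * lip y x ≤ lip x x * lip y y :=
    B.apply_mul_apply_le_of_forall_zero_le (fun v => lip_self_nonneg_of_timelike hz v.2)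
      ⟨x, hx⟩ ⟨y, hy⟩
  rw [lip_comm y x] at hcs
  refine abs_le_of_sq_le_sq ?_ (mul_nonneg (lnorm_nonneg x) (lnorm_nonneg y))
  rwa [mul_pow, lnorm_sq hz hx, lnorm_sq hz hy, sq]

theorem lip_nonpos_of_mem_LorentzCone (hx : x ∈ LorentzCone) (hy : y ∈ LorentzCone) :
    lip x y ≤ 0 := by
  have sqrt_le {z : Fin (n + 1) → ℝ} (hz : z ∈ LorentzCone) :
      √(∑ i : Fin n, z i.castSucc ^ 2) ≤ z (Fin.last n) :=
    Real.sqrt_le_iff.2 ⟨hz.2, sub_nonpos.1 (lip_self z ▸ hz.1)⟩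
  refine sub_nonpos.2 ((Real.sum_mul_le_sqrt_mul_sqrt _ _ _).trans ?_)
  exact mul_le_mul (sqrt_le hx) (sqrt_le hy) (Real.sqrt_nonneg _) hx.2

end LorentzForm

section Hyperboloid

variable {n : ℕ} {κ : ℝ} {p q w v x : Fin (n + 1) → ℝ}

theorem lip_self_neg_of_mem_Hyp (hκ : 0 < κ) (hp : p ∈ Hyp κ) : lip p p < 0 :=
  hp.1 ▸ div_neg_of_neg_of_pos neg_one_lt_zero hκ

theorem mem_LorentzCone_of_mem_Hyp (hκ : 0 < κ) (hp : p ∈ Hyp κ) : p ∈ LorentzCone :=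
  ⟨(lip_self_neg_of_mem_Hyp hκ hp).le, hp.2.le⟩

theorem mem_Hyp_of_lip_neg (hκ : 0 < κ) (hp : p ∈ Hyp κ) (hx : lip x x = -1 / κ)
    (hpx : lip p x < 0) : x ∈ Hyp κ := by
  refine ⟨hx, not_le.1 fun hlast => ?_⟩
  have hcone : -x ∈ LorentzCone := by
    refine ⟨?_, by simpa using hlast⟩
    rw [lip_neg_left, lip_neg_right, neg_neg, hx]
    exact (div_neg_of_neg_of_pos neg_one_lt_zero hκ).le
  have := lip_nonpos_of_mem_LorentzCone (mem_LorentzCone_of_mem_Hyp hκ hp) hcone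
  rw [lip_neg_right] at this
  linarith

theorem smul_add_smul_mem_Hyp (hκ : 0 < κ) (hp : p ∈ Hyp κ) (hv : lip p v = 0) {c s : ℝ}
    (hc : 0 < c) (h : κ * (s ^ 2 * lip v v) = c ^ 2 - 1) : c • p + s • v ∈ Hyp κ := by
  refine mem_Hyp_of_lip_neg hκ hp ?_ ?_
  · simp only [lip_add_left, lip_add_right, lip_smul_left, lip_smul_right, lip_comm v p, hp.1, hv]
    field_simp
    linarith
  · rw [lip_add_right, lip_smul_right, lip_smul_right, hv, mul_zero, add_zero]
    exact mul_neg_of_pos_of_neg hc (lip_self_neg_of_mem_Hyp hκ hp)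

theorem lip_projT (hκ : 0 < κ) (hp : p ∈ Hyp κ) (x : Fin (n + 1) → ℝ) :
    lip p (projT κ p x) = 0 := by
  rw [projT, lip_add_right, lip_smul_right, hp.1]
  field_simp
  ring

theorem lip_projT_projT (hκ : 0 < κ) (hp : p ∈ Hyp κ) (x y : Fin (n + 1) → ℝ) :
    lip (projT κ p x) (projT κ p y) = lip x y + κ * lip p x * lip p y := by
  simp only [projT, lip_add_right, lip_smul_right, lip_add_left, lip_smul_left, hp.1, lip_comm x p]
  field_simp
  ring

theorem projT_self (hκ : 0 < κ) (hp : p ∈ Hyp κ) : projT κ p p = 0 := by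
  rw [projT, hp.1, mul_div_cancel₀ _ hκ.ne', neg_one_smul, add_neg_cancel]

theorem one_le_neg_mul_lip (hκ : 0 < κ) (hp : p ∈ Hyp κ) (hq : q ∈ Hyp κ) :
    1 ≤ -(κ * lip p q) := by
  have htangent := lip_self_nonneg_of_timelike (lip_self_neg_of_mem_Hyp hκ hp) (lip_projT hκ hp q)
  rw [lip_projT_projT hκ hp, hq.1] at htangent
  have hsq : 1 ≤ (-(κ * lip p q)) ^ 2 := by
    have h := mul_nonneg hκ.le htangent
    rw [mul_add, mul_div_cancel₀ _ hκ.ne'] at h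
    linarith
  have hlip : lip p q ≤ 0 := lip_nonpos_of_mem_LorentzCone
    (mem_LorentzCone_of_mem_Hyp hκ hp) (mem_LorentzCone_of_mem_Hyp hκ hq)
  exact (one_le_sq_iff₀ (neg_nonneg.2 (mul_nonpos_of_nonneg_of_nonpos hκ.le hlip))).1 hsq

theorem dH_eq_arcosh_div (κ : ℝ) (p q : Fin (n + 1) → ℝ) :
    dH κ p q = Real.arcosh (-(κ * lip p q)) / √κ :=
  one_div_mul_eq_div _ _

theorem dH_nonneg (hκ : 0 < κ) (hp : p ∈ Hyp κ) (hq : q ∈ Hyp κ) : 0 ≤ dH κ p q := by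
  rw [dH_eq_arcosh_div]
  exact div_nonneg (Real.arcosh_nonneg (one_le_neg_mul_lip hκ hp hq)) (Real.sqrt_nonneg κ)

theorem cosh_sqrt_mul_dH (hκ : 0 < κ) (hp : p ∈ Hyp κ) (hq : q ∈ Hyp κ) :
    Real.cosh (√κ * dH κ p q) = -(κ * lip p q) := by
  rw [dH_eq_arcosh_div, mul_div_cancel₀ _ (Real.sqrt_pos.2 hκ).ne',
    Real.cosh_arcosh (one_le_neg_mul_lip hκ hp hq)]

theorem dH_eq_div_of_cosh_eq {s : ℝ} (hs : 0 ≤ s) (h : Real.cosh s = -(κ * lip p q)) :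
    dH κ p q = s / √κ := by
  rw [dH_eq_arcosh_div, ← h, Real.arcosh_cosh hs]

theorem dH_self (hκ : 0 < κ) (hp : p ∈ Hyp κ) : dH κ p p = 0 := by
  rw [dH_eq_arcosh_div, hp.1, mul_div_cancel₀ _ hκ.ne', neg_neg, Real.arcosh_zero, zero_div]

theorem lnorm_projT (hκ : 0 < κ) (hp : p ∈ Hyp κ) (hq : q ∈ Hyp κ) :
    lnorm (projT κ p q) = Real.sinh (√κ * dH κ p q) / √κ := by
  have hsinh : 0 ≤ Real.sinh (√κ * dH κ p q) :=
    Real.sinh_nonneg_iff.2 (mul_nonneg (Real.sqrt_nonneg κ) (dH_nonneg hκ hp hq))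
  rw [← sq_eq_sq₀ (lnorm_nonneg _) (div_nonneg hsinh (Real.sqrt_nonneg κ)),
    lnorm_sq (lip_self_neg_of_mem_Hyp hκ hp) (lip_projT hκ hp q), lip_projT_projT hκ hp, hq.1,
    div_pow, Real.sq_sqrt hκ.le, Real.sinh_sq, cosh_sqrt_mul_dH hκ hp hq]
  field_simp
  ring

theorem dH_pos (hκ : 0 < κ) (hp : p ∈ Hyp κ) (hq : q ∈ Hyp κ) (hpq : p ≠ q) :
    0 < dH κ p q := by
  refine (dH_nonneg hκ hp hq).lt_of_ne' fun hd => hpq ?_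
  have hproj : projT κ p q = 0 := by
    have hz := lip_self_neg_of_mem_Hyp hκ hp
    refine eq_zero_of_lip_self_eq_zero hz (lip_projT hκ hp q) ?_
    rw [← lnorm_sq hz (lip_projT hκ hp q), lnorm_projT hκ hp hq, hd]
    simp
  have hlip : κ * lip p q = -1 := by
    rw [← neg_eq_iff_eq_neg, ← cosh_sqrt_mul_dH hκ hp hq, hd, mul_zero, Real.cosh_zero]
  rw [projT, hlip, neg_one_smul, ← sub_eq_add_neg] at hproj
  exact (sub_eq_zero.1 hproj).symm

theorem logH_self (hκ : 0 < κ) (hp : p ∈ Hyp κ) : logH κ p p = 0 := by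
  rw [logH, projT_self hκ hp, smul_zero]

theorem logH_eq_smul_projT (hκ : 0 < κ) (hp : p ∈ Hyp κ) (hq : q ∈ Hyp κ) :
    logH κ p q = (√κ * dH κ p q / Real.sinh (√κ * dH κ p q)) • projT κ p q := by
  rw [logH, lnorm_projT hκ hp hq, div_div_eq_mul_div, mul_comm (dH κ p q)]

theorem exists_pos_logH_eq_smul_projT (hκ : 0 < κ) (hp : p ∈ Hyp κ) (hq : q ∈ Hyp κ) :
    ∃ c : ℝ, 0 < c ∧ logH κ p q = c • projT κ p q := by
  rcases eq_or_ne p q with rfl | hpq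
  · exact ⟨1, one_pos, by rw [logH_self hκ hp, projT_self hκ hp, smul_zero]⟩
  · have hs := mul_pos (Real.sqrt_pos.2 hκ) (dH_pos hκ hp hq hpq)
    exact ⟨_, div_pos hs (Real.sinh_pos_iff.2 hs), logH_eq_smul_projT hκ hp hq⟩

theorem expH_mem_Hyp (hκ : 0 < κ) (hp : p ∈ Hyp κ) (hv : lip p v = 0) : expH κ p v ∈ Hyp κ := by
  refine smul_add_smul_mem_Hyp hκ hp hv (Real.cosh_pos _) ?_
  rw [← Real.sinh_sq, ← lnorm_sq (lip_self_neg_of_mem_Hyp hκ hp) hv]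
  calc κ * ((Real.sinh (√κ * lnorm v) / (√κ * lnorm v)) ^ 2 * lnorm v ^ 2)
      = √κ ^ 2 * ((Real.sinh (√κ * lnorm v) / (√κ * lnorm v)) ^ 2 * lnorm v ^ 2) := by
        rw [Real.sq_sqrt hκ.le]
    _ = (Real.sinh (√κ * lnorm v) / (√κ * lnorm v) * (√κ * lnorm v)) ^ 2 := by ring
    _ = Real.sinh (√κ * lnorm v) ^ 2 := by
        rw [div_mul_cancel_of_imp fun h => by rw [h, Real.sinh_zero]]

theorem mul_lip_expH (hκ : 0 < κ) (hp : p ∈ Hyp κ) (hv : lip p v = 0) :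
    κ * lip p (expH κ p v) = -Real.cosh (√κ * lnorm v) := by
  rw [expH, lip_add_right, lip_smul_right, lip_smul_right, hv, hp.1]
  field_simp
  ring

theorem logH_expH (hκ : 0 < κ) (hp : p ∈ Hyp κ) (hv : lip p v = 0) :
    logH κ p (expH κ p v) = v := by
  have hk := Real.sqrt_pos.2 hκ
  have hdist : √κ * dH κ p (expH κ p v) = √κ * lnorm v := by
    rw [dH_eq_div_of_cosh_eq (mul_nonneg hk.le (lnorm_nonneg v))
      (by rw [mul_lip_expH hκ hp hv, neg_neg]), mul_div_cancel₀ _ hk.ne']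
  have hproj : projT κ p (expH κ p v) =
      (Real.sinh (√κ * lnorm v) / (√κ * lnorm v)) • v := by
    rw [projT, mul_lip_expH hκ hp hv, expH, neg_smul]
    abel
  rw [logH_eq_smul_projT hκ hp (expH_mem_Hyp hκ hp hv), hdist, hproj, smul_smul]
  rcases (lnorm_nonneg v).eq_or_lt with h | h
  · have hz := lip_self_neg_of_mem_Hyp hκ hp
    rw [eq_zero_of_lip_self_eq_zero hz hv (by rw [← lnorm_sq hz hv, ← h]; simp), smul_zero]
  · have hs := mul_pos hk h
    rw [div_mul_div_cancel₀ (Real.sinh_pos_iff.2 hs).ne', div_self hs.ne', one_smul]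

theorem mul_lip_logH_logH (hκ : 0 < κ) (hp : p ∈ Hyp κ) (hq : q ∈ Hyp κ) (hw : w ∈ Hyp κ) :
    κ * lip (logH κ p w) (logH κ p q) =
      √κ * dH κ p w / Real.sinh (√κ * dH κ p w) * (√κ * dH κ p q / Real.sinh (√κ * dH κ p q)) *
        (Real.cosh (√κ * dH κ p w) * Real.cosh (√κ * dH κ p q) - Real.cosh (√κ * dH κ q w)) := by
  rw [logH_eq_smul_projT hκ hp hw, logH_eq_smul_projT hκ hp hq, lip_smul_left, lip_smul_right,
    lip_projT_projT hκ hp, cosh_sqrt_mul_dH hκ hp hw, cosh_sqrt_mul_dH hκ hp hq,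
    cosh_sqrt_mul_dH hκ hq hw, lip_comm w q]
  ring

theorem cosh_mul_cosh_le_of_lip_logH_logH_nonpos (hκ : 0 < κ) (hp : p ∈ Hyp κ) (hq : q ∈ Hyp κ)
    (hw : w ∈ Hyp κ) (h : lip (logH κ q w) (logH κ q p) ≤ 0) :
    Real.cosh (√κ * dH κ q w) * Real.cosh (√κ * dH κ p q) ≤ Real.cosh (√κ * dH κ p w) := by
  obtain ⟨c, hc, hlogw⟩ := exists_pos_logH_eq_smul_projT hκ hq hw
  obtain ⟨d, hd, hlogp⟩ := exists_pos_logH_eq_smul_projT hκ hq hp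
  rw [hlogw, hlogp, lip_smul_left, lip_smul_right] at h
  have hproj := nonpos_of_mul_nonpos_right (nonpos_of_mul_nonpos_right h hc) hd
  rw [lip_projT_projT hκ hq, lip_comm w p, lip_comm q p] at hproj
  rw [cosh_sqrt_mul_dH hκ hq hw, cosh_sqrt_mul_dH hκ hp hq, cosh_sqrt_mul_dH hκ hp hw]
  linarith [mul_nonpos_of_nonneg_of_nonpos hκ.le hproj]

theorem sq_dH_le_lip_logH_logH (hκ : 0 < κ) (hp : p ∈ Hyp κ) (hq : q ∈ Hyp κ) (hw : w ∈ Hyp κ)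
    (h : lip (logH κ q w) (logH κ q p) ≤ 0) :
    dH κ p q ^ 2 ≤ lip (logH κ p w) (logH κ p q) := by
  rcases eq_or_ne p q with rfl | hpq
  · simp [dH_self hκ hp, logH_self hκ hp, lip_zero_right]
  have hk := Real.sqrt_pos.2 hκ
  refine le_of_mul_le_mul_left ?_ hκ
  calc κ * dH κ p q ^ 2 = (√κ * dH κ p q) ^ 2 := by rw [mul_pow, Real.sq_sqrt hκ.le]
    _ ≤ _ := sq_le_of_mul_cosh_le_cosh (mul_nonneg hk.le (dH_nonneg hκ hp hw))
        (mul_pos hk (dH_pos hκ hp hq hpq)) (Real.one_le_cosh _)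
        (cosh_mul_cosh_le_of_lip_logH_logH_nonpos hκ hp hq hw h)
    _ = κ * lip (logH κ p w) (logH κ p q) := (mul_lip_logH_logH hκ hp hq hw).symm

theorem lip_logH_le_of_lip_logH_expH_nonpos (hκ : 0 < κ) (hp : p ∈ Hyp κ) (hq : q ∈ Hyp κ)
    (hv : lip p v = 0) {α : ℝ} (hα : 0 < α)
    (h : lip (logH κ q (expH κ p (-(α • v)))) (logH κ q p) ≤ 0) :
    lip v (logH κ p q) ≤ -(1 / α) * dH κ p q ^ 2 := by
  have hstep : lip p (-(α • v)) = 0 := by rw [lip_neg_right, lip_smul_right, hv, mul_zero, neg_zero]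
  have hsq := sq_dH_le_lip_logH_logH hκ hp hq (expH_mem_Hyp hκ hp hstep) h
  rw [logH_expH hκ hp hstep, lip_neg_left, lip_smul_left] at hsq
  rw [neg_mul, one_div_mul_eq_div, le_neg, div_le_iff₀ hα]
  linarith

end Hyperboloid

section Geodesics

variable {n : ℕ} {κ : ℝ} {p q u v w : Fin (n + 1) → ℝ}

/-- The curve `τ ↦ cosh τ • p + sinh τ • u`. When `u` is a geodesic direction at `p`, this is the
geodesic of the hyperboloid issuing from `p` with velocity `u`, and `τ` is `√κ` times its arc
length. -/
def geodesic (p u : Fin (n + 1) → ℝ) (τ : ℝ) : Fin (n + 1) → ℝ :=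
  Real.cosh τ • p + Real.sinh τ • u

/-- The velocity of `geodesic p u` at time `τ`. -/
def geodesicVelocity (p u : Fin (n + 1) → ℝ) (τ : ℝ) : Fin (n + 1) → ℝ :=
  Real.sinh τ • p + Real.cosh τ • u

/-- A tangent vector `u` at `p`, normalised to length `1 / √κ` so that `geodesic p u` stays on the
hyperboloid. -/
structure IsGeodesicDirection (κ : ℝ) (p u : Fin (n + 1) → ℝ) : Prop where
  lip_base : lip p u = 0
  lip_self : lip u u = 1 / κ

theorem geodesic_zero (p u : Fin (n + 1) → ℝ) : geodesic p u 0 = p := by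
  simp [geodesic]

theorem hasDerivAt_geodesic (p u : Fin (n + 1) → ℝ) (τ : ℝ) :
    HasDerivAt (geodesic p u) (geodesicVelocity p u τ) τ :=
  ((Real.hasDerivAt_cosh τ).smul_const p).add ((Real.hasDerivAt_sinh τ).smul_const u)

theorem sinh_smul_geodesic (p u : Fin (n + 1) → ℝ) (s τ : ℝ) :
    Real.sinh s • geodesic p u τ = Real.sinh (s - τ) • p + Real.sinh τ • geodesic p u s := by
  rw [geodesic, geodesic, Real.sinh_sub]
  module

theorem lip_geodesic_geodesic (hp : p ∈ Hyp κ) (hu : IsGeodesicDirection κ p u) (σ τ : ℝ) :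
    lip (geodesic p u σ) (geodesic p u τ) = -(Real.cosh (σ - τ) / κ) := by
  simp only [geodesic, lip_add_left, lip_add_right, lip_smul_left, lip_smul_right, lip_comm u p,
    hp.1, hu.lip_base, hu.lip_self, Real.cosh_sub]
  ring

theorem lip_geodesic_geodesicVelocity (hp : p ∈ Hyp κ) (hu : IsGeodesicDirection κ p u)
    (σ τ : ℝ) : lip (geodesic p u σ) (geodesicVelocity p u τ) = Real.sinh (σ - τ) / κ := by
  simp only [geodesic, geodesicVelocity, lip_add_left, lip_add_right, lip_smul_left,
    lip_smul_right, lip_comm u p, hp.1, hu.lip_base, hu.lip_self, Real.sinh_sub]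
  ring

theorem lip_geodesicVelocity_self (hp : p ∈ Hyp κ) (hu : IsGeodesicDirection κ p u) (τ : ℝ) :
    lip (geodesicVelocity p u τ) (geodesicVelocity p u τ) = 1 / κ := by
  simp only [geodesicVelocity, lip_add_left, lip_add_right, lip_smul_left, lip_smul_right,
    lip_comm u p, hp.1, hu.lip_base, hu.lip_self]
  linear_combination 1 / κ * Real.cosh_sq τ

theorem lnorm_geodesicVelocity (hp : p ∈ Hyp κ) (hu : IsGeodesicDirection κ p u) (τ : ℝ) :
    lnorm (geodesicVelocity p u τ) = 1 / √κ := by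
  rw [lnorm, lip_geodesicVelocity_self hp hu, Real.sqrt_div zero_le_one, Real.sqrt_one]

theorem mul_lip_base_geodesic (hκ : 0 < κ) (hp : p ∈ Hyp κ) (hu : IsGeodesicDirection κ p u)
    (τ : ℝ) : κ * lip p (geodesic p u τ) = -Real.cosh τ := by
  have h := lip_geodesic_geodesic hp hu 0 τ
  rw [geodesic_zero, zero_sub, Real.cosh_neg] at h
  rw [h, mul_neg, mul_div_cancel₀ _ hκ.ne']

theorem geodesic_mem_Hyp (hκ : 0 < κ) (hp : p ∈ Hyp κ) (hu : IsGeodesicDirection κ p u)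
    (τ : ℝ) : geodesic p u τ ∈ Hyp κ := by
  refine smul_add_smul_mem_Hyp hκ hp hu.lip_base (Real.cosh_pos τ) ?_
  rw [hu.lip_self, ← Real.sinh_sq]
  field_simp

theorem dH_geodesic (hκ : 0 < κ) (hp : p ∈ Hyp κ) (hu : IsGeodesicDirection κ p u) {τ : ℝ}
    (hτ : 0 ≤ τ) : dH κ p (geodesic p u τ) = τ / √κ :=
  dH_eq_div_of_cosh_eq hτ (by rw [mul_lip_base_geodesic hκ hp hu, neg_neg])

theorem exists_geodesic_eq (hκ : 0 < κ) (hp : p ∈ Hyp κ) (hq : q ∈ Hyp κ) (hpq : p ≠ q) :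
    ∃ u, IsGeodesicDirection κ p u ∧ geodesic p u (√κ * dH κ p q) = q ∧
      logH κ p q = (√κ * dH κ p q) • u := by
  have hs := mul_pos (Real.sqrt_pos.2 hκ) (dH_pos hκ hp hq hpq)
  have hsinh := (Real.sinh_pos_iff.2 hs).ne'
  refine ⟨(Real.sinh (√κ * dH κ p q))⁻¹ • projT κ p q, ⟨?_, ?_⟩, ?_, ?_⟩
  · rw [lip_smul_right, lip_projT hκ hp, mul_zero]
  · rw [lip_smul_left, lip_smul_right,
      ← lnorm_sq (lip_self_neg_of_mem_Hyp hκ hp) (lip_projT hκ hp q), lnorm_projT hκ hp hq,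
      div_pow, Real.sq_sqrt hκ.le]
    field_simp
  · rw [geodesic, smul_inv_smul₀ hsinh, projT, cosh_sqrt_mul_dH hκ hp hq]
    module
  · rw [logH_eq_smul_projT hκ hp hq, smul_smul, div_eq_mul_inv]

theorem lip_ptrans (hκ : 0 < κ) (hp : p ∈ Hyp κ) (hq : q ∈ Hyp κ) (v : Fin (n + 1) → ℝ) :
    lip q (ptrans κ p q v) = 0 := by
  have hne : κ * lip p q - 1 ≠ 0 := by linarith [one_le_neg_mul_lip hκ hp hq]
  rw [ptrans, lip_sub_right, lip_smul_right, lip_add_right, hq.1, lip_comm q p]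
  field_simp
  ring

theorem lip_ptrans_geodesicVelocity (hκ : 0 < κ) (hp : p ∈ Hyp κ)
    (hu : IsGeodesicDirection κ p u) (hv : lip p v = 0) (τ : ℝ) :
    lip (ptrans κ p (geodesic p u τ) v) (geodesicVelocity p u τ) = lip v u := by
  have hvel : lip v (geodesicVelocity p u τ) = Real.cosh τ * lip v u := by
    rw [geodesicVelocity, lip_add_right, lip_smul_right, lip_smul_right, lip_comm v p, hv]
    ring
  have hpos : lip (geodesic p u τ) v = Real.sinh τ * lip v u := by
    rw [geodesic, lip_add_left, lip_smul_left, lip_smul_left, lip_comm u v, hv]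
    ring
  have hbase : lip p (geodesicVelocity p u τ) = -(Real.sinh τ / κ) := by
    have h := lip_geodesic_geodesicVelocity hp hu 0 τ
    rwa [geodesic_zero, zero_sub, Real.sinh_neg, neg_div] at h
  have hself : lip (geodesic p u τ) (geodesicVelocity p u τ) = 0 := by
    rw [lip_geodesic_geodesicVelocity hp hu, sub_self, Real.sinh_zero, zero_div]
  have hne : -Real.cosh τ - 1 ≠ 0 := by linarith [Real.cosh_pos τ]
  rw [ptrans, lip_sub_left, lip_smul_left, lip_add_left, mul_lip_base_geodesic hκ hp hu, hvel,
    hpos, hbase, hself]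
  field_simp
  linear_combination -lip v u * Real.cosh_sq τ

theorem lip_geodesicVelocity_le (hκ : 0 < κ) (hp : p ∈ Hyp κ) (hu : IsGeodesicDirection κ p u)
    (hv : lip p v = 0) {τ K : ℝ} (hw : lip (geodesic p u τ) w = 0)
    (hK : lnorm (ptrans κ p (geodesic p u τ) v - w) ≤ K) :
    lip w (geodesicVelocity p u τ) ≤ lip v u + K / √κ := by
  have hmem := geodesic_mem_Hyp hκ hp hu τ
  have hcs := abs_lip_le_lnorm_mul_lnorm (lip_self_neg_of_mem_Hyp hκ hmem)
    (x := ptrans κ p (geodesic p u τ) v - w) (y := geodesicVelocity p u τ)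
    (by rw [lip_sub_right, lip_ptrans hκ hp hmem, hw, sub_zero])
    (by rw [lip_geodesic_geodesicVelocity hp hu, sub_self, Real.sinh_zero, zero_div])
  rw [lip_sub_left, lip_ptrans_geodesicVelocity hκ hp hu hv, lnorm_geodesicVelocity hp hu,
    mul_one_div] at hcs
  have hK' := div_le_div_of_nonneg_right hK (Real.sqrt_nonneg κ)
  linarith [(neg_le_abs _).trans hcs]

end Geodesics

section ConvexSets

variable {n : ℕ} {κ : ℝ} {C : Set (Fin (n + 1) → ℝ)} {p u x y : Fin (n + 1) → ℝ}

theorem smul_mem_coneOf {c : ℝ} (hc : 0 ≤ c) (hx : x ∈ coneOf C) : c • x ∈ coneOf C := by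
  obtain ⟨t, ht, y, hy, rfl⟩ := hx
  exact ⟨c * t, mul_nonneg hc ht, y, hy, smul_smul c t y⟩

theorem subset_coneOf : C ⊆ coneOf C :=
  fun x hx => ⟨1, zero_le_one, x, hx, (one_smul ℝ x).symm⟩

theorem add_mem_coneOf (hconv : Convex ℝ (coneOf C)) (hx : x ∈ coneOf C) (hy : y ∈ coneOf C) :
    x + y ∈ coneOf C := by
  have hmid := smul_mem_coneOf zero_le_two (hconv.midpoint_mem hx hy)
  rwa [midpoint_eq_smul_add, smul_smul, mul_invOf_self, one_smul] at hmid

theorem mem_of_smul_mem_coneOf (hκ : 0 < κ) (hC : C ⊆ Hyp κ) (hx : x ∈ Hyp κ) {c : ℝ}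
    (hc : 0 < c) (h : c • x ∈ coneOf C) : x ∈ C := by
  obtain ⟨t, ht, y, hy, hxy⟩ := h
  have htc : c = t := by
    have hlip : lip (c • x) (c • x) = lip (t • y) (t • y) := by rw [hxy]
    simp only [lip_smul_left, lip_smul_right, hx.1, (hC hy).1] at hlip
    field_simp at hlip
    nlinarith
  rw [← htc] at hxy
  rwa [smul_right_injective _ hc.ne' hxy]

theorem geodesic_mem_of_convex_coneOf (hκ : 0 < κ) (hC : C ⊆ Hyp κ) (hconv : Convex ℝ (coneOf C))
    (hp : p ∈ C) (hu : IsGeodesicDirection κ p u) {s τ : ℝ} (hs : 0 < s)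
    (hq : geodesic p u s ∈ C) (hτ : τ ∈ Set.Icc 0 s) : geodesic p u τ ∈ C := by
  refine mem_of_smul_mem_coneOf hκ hC (geodesic_mem_Hyp hκ (hC hp) hu τ)
    (Real.sinh_pos_iff.2 hs) ?_
  rw [sinh_smul_geodesic]
  exact add_mem_coneOf hconv
    (smul_mem_coneOf (Real.sinh_nonneg_iff.2 (sub_nonneg.2 hτ.2)) (subset_coneOf hp))
    (smul_mem_coneOf (Real.sinh_nonneg_iff.2 hτ.1) (subset_coneOf hq))

end ConvexSets

section Gradient

variable {n : ℕ} {κ : ℝ} {C : Set (Fin (n + 1) → ℝ)} {f : (Fin (n + 1) → ℝ) → ℝ}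
  {p q : Fin (n + 1) → ℝ} {L : ℝ}

theorem lip_Jm_left (x y : Fin (n + 1) → ℝ) : lip (Jm x) y = edot x y := by
  simp [lip, Jm, edot, Fin.sum_univ_castSucc, Fin.castSucc_ne_last]

theorem edot_euclGrad (f : (Fin (n + 1) → ℝ) → ℝ) (p x : Fin (n + 1) → ℝ) :
    edot (euclGrad f p) x = fderiv ℝ f p x := by
  conv_rhs => rw [pi_eq_sum_univ' x]
  simp [edot, euclGrad, mul_comm]

theorem lip_gradH_eq_fderiv {x : Fin (n + 1) → ℝ} (hx : lip p x = 0) :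
    lip (gradH κ f p) x = fderiv ℝ f p x := by
  rw [gradH, projT, lip_add_left, lip_smul_left, hx, mul_zero, add_zero, lip_Jm_left,
    edot_euclGrad]

theorem hasDerivAt_comp_geodesic (hp : p ∈ Hyp κ) {u : Fin (n + 1) → ℝ}
    (hu : IsGeodesicDirection κ p u) {τ : ℝ} (hf : DifferentiableAt ℝ f (geodesic p u τ)) :
    HasDerivAt (fun τ => f (geodesic p u τ))
      (lip (gradH κ f (geodesic p u τ)) (geodesicVelocity p u τ)) τ := by
  rw [lip_gradH_eq_fderiv
    (by rw [lip_geodesic_geodesicVelocity hp hu, sub_self, Real.sinh_zero, zero_div])]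
  exact hf.hasFDerivAt.comp_hasDerivAt τ (hasDerivAt_geodesic p u τ)

theorem le_add_lip_gradH_logH_add_sq (hκ : 0 < κ) (hC : C ⊆ Hyp κ) (hconv : Convex ℝ (coneOf C))
    (hf : ∀ x ∈ C, DifferentiableAt ℝ f x) (hp : p ∈ C) (hq : q ∈ C)
    (hLip : ∀ x ∈ C, lnorm (ptrans κ p x (gradH κ f p) - gradH κ f x) ≤ L * dH κ p x) :
    f q ≤ f p + lip (gradH κ f p) (logH κ p q) + L / 2 * dH κ p q ^ 2 := by
  have hpH := hC hp
  rcases eq_or_ne p q with rfl | hpq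
  · simp [dH_self hκ hpH, logH_self hκ hpH, lip_zero_right]
  obtain ⟨u, hu, hend, hlog⟩ := exists_geodesic_eq hκ hpH (hC hq) hpq
  have hs := mul_pos (Real.sqrt_pos.2 hκ) (dH_pos hκ hpH (hC hq) hpq)
  set s := √κ * dH κ p q with hs_def
  have hmem : ∀ τ ∈ Set.Icc 0 s, geodesic p u τ ∈ C := fun τ hτ =>
    geodesic_mem_of_convex_coneOf hκ hC hconv hp hu hs (hend ▸ hq) hτ
  have hderiv : ∀ τ ∈ Set.Icc 0 s, HasDerivAt (fun τ => f (geodesic p u τ))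
      (lip (gradH κ f (geodesic p u τ)) (geodesicVelocity p u τ)) τ := fun τ hτ =>
    hasDerivAt_comp_geodesic hpH hu (hf _ (hmem τ hτ))
  have hslope : ∀ τ ∈ Set.Icc 0 s, lip (gradH κ f (geodesic p u τ)) (geodesicVelocity p u τ) ≤
      lip (gradH κ f p) u + L / κ * τ := fun τ hτ => by
    have h := lip_geodesicVelocity_le hκ hpH hu (lip_projT hκ hpH _)
      (lip_projT hκ (geodesic_mem_Hyp hκ hpH hu τ) _) (hLip _ (hmem τ hτ))
    rwa [dH_geodesic hκ hpH hu hτ.1, mul_div_assoc', div_div, Real.mul_self_sqrt hκ.le,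
      mul_div_right_comm] at h
  have hquad : ∀ τ, HasDerivAt (fun τ => f p + lip (gradH κ f p) u * τ + L / (2 * κ) * τ ^ 2)
      (lip (gradH κ f p) u + L / κ * τ) τ := fun τ => by
    have h := (((hasDerivAt_id τ).const_mul (lip (gradH κ f p) u)).const_add (f p)).add
      ((hasDerivAt_pow 2 τ).const_mul (L / (2 * κ)))
    exact h.congr_deriv (by norm_num; field_simp)
  have hcompare := image_le_of_deriv_right_le_deriv_boundary
    (fun τ hτ => (hderiv τ hτ).continuousAt.continuousWithinAt)
    (fun τ hτ => (hderiv τ (Set.Ico_subset_Icc_self hτ)).hasDerivWithinAt)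
    (by simp [geodesic_zero])
    (fun τ _ => (hquad τ).continuousAt.continuousWithinAt)
    (fun τ _ => (hquad τ).hasDerivWithinAt)
    (fun τ hτ => hslope τ (Set.Ico_subset_Icc_self hτ)) (Set.right_mem_Icc.2 hs.le)
  calc f q ≤ f p + lip (gradH κ f p) u * s + L / (2 * κ) * s ^ 2 := hend ▸ hcompare
    _ = f p + lip (gradH κ f p) (logH κ p q) + L / 2 * dH κ p q ^ 2 := by
      rw [hlog, lip_smul_right, mul_comm s, hs_def, mul_pow, Real.sq_sqrt hκ.le]
      field_simp

theorem gradient_projection_step_le (hκ : 0 < κ) (hC : C ⊆ Hyp κ) (hconv : Convex ℝ (coneOf C))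
    (hf : ∀ x ∈ C, DifferentiableAt ℝ f x) (hp : p ∈ C) (hq : q ∈ C)
    (hLip : ∀ x ∈ C, lnorm (ptrans κ p x (gradH κ f p) - gradH κ f x) ≤ L * dH κ p x)
    {α : ℝ} (hα : 0 < α)
    (hproj : lip (logH κ q (expH κ p (-(α • gradH κ f p)))) (logH κ q p) ≤ 0) :
    f q ≤ f p - (2 - α * L) / (2 * α) * dH κ p q ^ 2 := by
  calc f q ≤ f p + lip (gradH κ f p) (logH κ p q) + L / 2 * dH κ p q ^ 2 :=
        le_add_lip_gradH_logH_add_sq hκ hC hconv hf hp hq hLip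
    _ ≤ f p + -(1 / α) * dH κ p q ^ 2 + L / 2 * dH κ p q ^ 2 := by
        gcongr
        exact lip_logH_le_of_lip_logH_expH_nonpos hκ (hC hp) (hC hq)
          (lip_projT hκ (hC hp) _) hα hproj
    _ = f p - (2 - α * L) / (2 * α) * dH κ p q ^ 2 := by
        field_simp
        ring

end Gradient

theorem gradient_projection_constant_stepsize_descent_general {n : ℕ} {κ : ℝ} (hκ : 0 < κ)
    {C : Set (Fin (n + 1) → ℝ)} (hC : C ⊆ Hyp κ) (hconv : Convex ℝ (coneOf C))
    {f : (Fin (n + 1) → ℝ) → ℝ} (hf : ∀ x ∈ C, DifferentiableAt ℝ f x) {L : ℝ}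
    (hLip : ∀ a ∈ C, ∀ b ∈ C,
      lnorm (ptrans κ a b (gradH κ f a) - gradH κ f b) ≤ L * dH κ a b)
    {α : ℝ} (hα : 0 < α) {p : ℕ → Fin (n + 1) → ℝ} (hp0 : p 0 ∈ C)
    (hrec : ∀ k, p (k + 1) ∈ C ∧
      lip (logH κ (p (k + 1)) (expH κ (p k) (-(α • gradH κ f (p k)))))
        (logH κ (p (k + 1)) (p k)) ≤ 0) :
    (∀ k, p k ∈ C) ∧
    (∀ k, f (p (k + 1)) ≤ f (p k) - (2 - α * L) / (2 * α) * dH κ (p k) (p (k + 1)) ^ 2) ∧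
    (α * L ≤ 2 → ∀ k, f (p (k + 1)) ≤ f (p k)) := by
  have hmem : ∀ k, p k ∈ C
    | 0 => hp0
    | k + 1 => (hrec k).1
  have hstep k := gradient_projection_step_le hκ hC hconv hf (hmem k) (hmem (k + 1))
    (hLip _ (hmem k)) hα (hrec k).2
  refine ⟨hmem, hstep, fun hαL k => (hstep k).trans (sub_le_self _ ?_)⟩
  exact mul_nonneg (div_nonneg (sub_nonneg.2 hαL) (by positivity)) (sq_nonneg _)

/-- Descent property of the gradient projection method with constant step size:
if grad f is Lipschitz on C with constant L, 0 < α < 1/L, and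
p_{k+1} = P_C(exp_{p_k}(−α grad f(p_k))) with p₀ ∈ C, then the sequence stays in C,
f(p_{k+1}) ≤ f(p_k) − ((1−αL)/(2α))·d(p_k,p_{k+1})², and (f(p_k)) is non-increasing. -/
theorem gradient_projection_constant_stepsize_descent {n : ℕ} (κ : ℝ) (hκ : 0 < κ)
    (C : Set (Fin (n+1) → ℝ)) (hC : C ⊆ Hyp κ) (hCc : IsClosed C)
    (hconv : Convex ℝ (coneOf C))
    (f : (Fin (n+1) → ℝ) → ℝ) (hf : Differentiable ℝ f)
    (L : ℝ) (hL : 0 ≤ L)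
    (hLip : ∀ a ∈ C, ∀ b ∈ C,
      lnorm (ptrans κ a b (gradH κ f a) - gradH κ f b) ≤ L * dH κ a b)
    (α : ℝ) (hα1 : 0 < α) (hα2 : α < 1 / L)
    (p : ℕ → Fin (n+1) → ℝ) (hp0 : p 0 ∈ C)
    (hrec : ∀ k : ℕ, p (k+1) ∈ C ∧
      (∀ y ∈ C, dH κ (expH κ (p k) (-(α • gradH κ f (p k)))) (p (k+1)) ≤
        dH κ (expH κ (p k) (-(α • gradH κ f (p k)))) y) ∧
      (∀ y ∈ C, lip (logH κ (p (k+1)) (expH κ (p k) (-(α • gradH κ f (p k)))))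
        (logH κ (p (k+1)) y) ≤ 0)) :
    (∀ k : ℕ, p k ∈ C) ∧
    (∀ k : ℕ, f (p (k+1)) ≤ f (p k) - ((1 - α * L) / (2 * α)) * dH κ (p k) (p (k+1)) ^ 2) ∧
    (∀ k : ℕ, f (p (k+1)) ≤ f (p k)) := by
  obtain ⟨hmem, hdescent, hmono⟩ := gradient_projection_constant_stepsize_descent_general hκ hC
    hconv (fun x _ => hf x) hLip hα1 hp0 fun k =>
      ⟨(hrec k).1, (hrec k).2.2 (p k) (k.casesOn hp0 fun j => (hrec j).1)⟩
  exact ⟨hmem, fun k => (hdescent k).trans (by gcongr; norm_num),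
    hmono ((mul_le_of_le_div₀ zero_le_one hL hα2.le).trans one_le_two)⟩
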